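/- Let A₁, A₂, A₃ be hermitian 4×4 complex matrices, let P ∈ M₄(ℂ) be a nonzero orthogonal projection (P = P* = P²), and let p₁, p₂, p₃ ∈ ℝ satisfy AᵢP = pᵢP for i = 1,2,3. If the joint numerical range W = W(A₁,A₂,A₃) has a one-dimensional nonexposed face, then (p₁,p₂,p₃) is a corner point of W. -/

import Mathlib

open Matrix ComplexOrder

noncomputable section

/-- A density matrix: positive semidefinite with unit trace. -/
def IsDensity {n : Type*} [Fintype n] (ρ : Matrix n n ℂ) : Prop :=
  ρ.PosSemidef ∧ ρ.trace = 1

/-- The measurement map `ρ ↦ (tr ρA₁, …, tr ρA_k)` (the traces are real for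
hermitian matrices). -/
def wpt {n : Type*} [Fintype n] {k : ℕ} (A : Fin k → Matrix n n ℂ)
    (ρ : Matrix n n ℂ) : Fin k → ℝ :=
  fun i => ((ρ * A i).trace).re

/-- The joint numerical range of `k` matrices. -/
def JNR {n : Type*} [Fintype n] {k : ℕ} (A : Fin k → Matrix n n ℂ) :
    Set (Fin k → ℝ) :=
  wpt A '' {ρ | IsDensity ρ}

/-- `F` is a face of the convex set `C`: a convex subset such that whenever an
open segment between two points of `C` meets `F`, both endpoints lie in `F`. -/
def IsFaceOf {E : Type*} [AddCommGroup E] [Module ℝ E] (C F : Set E) : Prop :=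
  Convex ℝ F ∧ IsExtreme ℝ C F

/-- The dimension of a convex set: the dimension of its affine hull. -/
def convDim {E : Type*} [AddCommGroup E] [Module ℝ E] (F : Set E) : ℕ :=
  Module.finrank ℝ (affineSpan ℝ F).direction

/-- Euclidean dot product on `Fin d → ℝ`. -/
def dotR {d : ℕ} (u v : Fin d → ℝ) : ℝ := ∑ i, u i * v i

/-- `F` is an exposed face of `C`: the set of minimizers of a linear functional. -/
def IsExposedFace {d : ℕ} (C F : Set (Fin d → ℝ)) : Prop :=
  ∃ u : Fin d → ℝ, F = {x ∈ C | ∀ y ∈ C, dotR u x ≤ dotR u y}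

/-- The normal cone of `C` at `p`. -/
def normalConeAt {d : ℕ} (C : Set (Fin d → ℝ)) (p : Fin d → ℝ) :
    Set (Fin d → ℝ) :=
  {u | ∀ y ∈ C, 0 ≤ dotR (y - p) u}

/-- `p` is a corner point of `C` if the normal cone of `C` at `p` spans `ℝ^d`. -/
def IsCornerPoint {d : ℕ} (C : Set (Fin d → ℝ)) (p : Fin d → ℝ) : Prop :=
  p ∈ C ∧ Submodule.span ℝ (normalConeAt C p) = ⊤

/-- The closed unit disk of `ℝ²`. -/
def unitDisk2 : Set (Fin 2 → ℝ) := {v | v 0 ^ 2 + v 1 ^ 2 ≤ 1}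

/-- An elliptic disk in `ℝ³`: the image of the closed unit disk of `ℝ²` under an
injective affine map. -/
def IsEllipticDisk (F : Set (Fin 3 → ℝ)) : Prop :=
  ∃ f : (Fin 2 → ℝ) →ᵃ[ℝ] (Fin 3 → ℝ), Function.Injective f ∧ F = f '' unitDisk2

/-- A non-elliptic face of `W`: a two-dimensional face that is not an elliptic
disk. -/
def IsNonEllipticFace (W F : Set (Fin 3 → ℝ)) : Prop :=
  IsFaceOf W F ∧ convDim F = 2 ∧ ¬ IsEllipticDisk F

/-- A rank-3 face of the joint numerical range of `A`. -/
def IsRank3Face {k : ℕ} (A : Fin k → Matrix (Fin 4) (Fin 4) ℂ)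
    (F : Set (Fin k → ℝ)) : Prop :=
  F.Nonempty ∧ IsFaceOf (JNR A) F ∧
    ∃ P : Matrix (Fin 4) (Fin 4) ℂ, Pᴴ = P ∧ P * P = P ∧ P.rank = 3 ∧
      ∀ ρ : Matrix (Fin 4) (Fin 4) ℂ, IsDensity ρ → (wpt A ρ ∈ F ↔ P * ρ * P = ρ)

theorem psd_factor {ρ : Matrix (Fin 4) (Fin 4) ℂ} (h : ρ.PosSemidef) :
    ∃ X : Matrix (Fin 4) (Fin 4) ℂ, ρ = Xᴴ * X := by
  open scoped MatrixOrder Matrix.Norms.L2Operator in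
  exact CStarAlgebra.nonneg_iff_eq_star_mul_self.1 h.nonneg

theorem psd_bound (Z : Matrix (Fin 4) (Fin 4) ℂ) :
    ∃ c : ℝ, 0 ≤ c ∧ ((c : ℂ) • (1 : Matrix (Fin 4) (Fin 4) ℂ) - Zᴴ * Z).PosSemidef := by
  open scoped MatrixOrder Matrix.Norms.L2Operator in
  refine ⟨‖Z‖ ^ 2, by positivity, ?_⟩
  have h := CStarAlgebra.star_mul_le_algebraMap_norm_sq (a := Z)
  rw [Matrix.le_iff] at h
  have e : ((‖Z‖ ^ 2 : ℝ) : ℂ) • (1 : Matrix (Fin 4) (Fin 4) ℂ)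
      = algebraMap ℝ (Matrix (Fin 4) (Fin 4) ℂ) (‖Z‖ ^ 2) := by
    rw [Algebra.algebraMap_eq_smul_one]
    ext i j
    simp
  rw [e]
  exact h

theorem factor_ker (R X : Matrix (Fin 4) (Fin 4) ℂ) (h : ∀ x, R *ᵥ x = 0 → X *ᵥ x = 0) :
    ∃ Z : Matrix (Fin 4) (Fin 4) ℂ, X = Z * R := by
  have hk : LinearMap.ker R.mulVecLin ≤ LinearMap.ker X.mulVecLin := by
    intro x hx
    simp only [LinearMap.mem_ker, Matrix.mulVecLin_apply] at hx ⊢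
    exact h x hx
  obtain ⟨g, hg⟩ := LinearMap.exists_extend
    (((LinearMap.ker R.mulVecLin).liftQ X.mulVecLin hk) ∘ₗ
      (R.mulVecLin.quotKerEquivRange.symm.toLinearMap))
  refine ⟨LinearMap.toMatrix' g, ?_⟩
  apply Matrix.toLin'.injective
  rw [Matrix.toLin'_mul, Matrix.toLin'_toMatrix']
  apply LinearMap.ext
  intro x
  have := LinearMap.congr_fun hg (R.mulVecLin.quotKerEquivRange (Submodule.Quotient.mk x))
  simp at this
  simpa using this.symm

theorem psd_dom {μ δ : Matrix (Fin 4) (Fin 4) ℂ} (hμ : μ.PosSemidef) (hδ : δ.PosSemidef)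
    (h : ∀ x, μ *ᵥ x = 0 → δ *ᵥ x = 0) :
    ∃ ε : ℝ, 0 < ε ∧ ε < 1 ∧ (μ - (ε : ℂ) • δ).PosSemidef := by
  obtain ⟨R, rfl⟩ := psd_factor hμ
  obtain ⟨X, rfl⟩ := psd_factor hδ
  have h' : ∀ x, R *ᵥ x = 0 → X *ᵥ x = 0 := by
    intro x hx
    have h1 := h x (by rw [← Matrix.mulVec_mulVec, hx, Matrix.mulVec_zero])
    exact (Matrix.conjTranspose_mul_self_mulVec_eq_zero X x).1 h1
  obtain ⟨Z, rfl⟩ := factor_ker R X h'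
  obtain ⟨c, hc, hZ⟩ := psd_bound Z
  refine ⟨1 / (c + 2), by positivity, by rw [div_lt_one] <;> linarith, ?_⟩
  have h1 := hZ.conjTranspose_mul_mul_same R
  have h2 := (h1.add (hμ.add hμ)).smul (a := ((1 / (c + 2) : ℝ) : ℂ))
    (by rw [Complex.zero_le_real]; positivity)
  convert h2 using 1
  have : (c : ℂ) + 2 ≠ 0 := by exact_mod_cast (by positivity : c + 2 ≠ 0)
  have e : (c : ℂ) • (Rᴴ * R) + (Rᴴ * R + Rᴴ * R) = ((c : ℂ) + 2) • (Rᴴ * R) := by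
    module
  rw [Matrix.mul_sub, Matrix.sub_mul, Matrix.mul_smul, Matrix.smul_mul, Matrix.mul_one,
    sub_add_eq_add_sub, e, smul_sub, smul_smul]
  push_cast
  rw [one_div, inv_mul_cancel₀ this, one_smul, Matrix.conjTranspose_mul]
  simp only [Matrix.mul_assoc]

theorem bloch {α β δ : Matrix (Fin 4) (Fin 4) ℂ} (hα : IsDensity α) (hβ : IsDensity β)
    (hδ : IsDensity δ) (K : Submodule ℂ (Fin 4 → ℂ)) (hK : Module.finrank ℂ K ≤ 2)
    (kα : ∀ x, α *ᵥ x ∈ K) (kβ : ∀ x, β *ᵥ x ∈ K) (kδ : ∀ x, δ *ᵥ x ∈ K) (hne : α ≠ β) :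
    ∃ ε : ℝ, 0 < ε ∧ ε < 1 ∧ ((α + β) - (ε : ℂ) • δ).PosSemidef := by
  apply psd_dom (hα.1.add hβ.1) hδ.1
  let R := LinearMap.range α.mulVecLin ⊔ LinearMap.range β.mulVecLin
  have hRK : R ≤ K := by
    apply sup_le
    · rintro _ ⟨x, rfl⟩; exact kα x
    · rintro _ ⟨x, rfl⟩; exact kβ x
  have hR : R = K := by
    apply Submodule.eq_of_le_of_finrank_le hRK
    refine hK.trans ?_
    by_contra hlt
    have hle : Module.finrank ℂ R ≤ 1 := by omega
    obtain ⟨r, hr⟩ := finrank_le_one_iff.1 hle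
    have hD : ∀ j, ∃ c : ℂ, ∀ i, (α - β) i j = r.1 i * c := by
      intro j
      have hm : (α - β) *ᵥ (Pi.single j 1) ∈ R := by
        rw [Matrix.sub_mulVec]
        exact Submodule.sub_mem _ (Submodule.mem_sup_left ⟨_, rfl⟩)
          (Submodule.mem_sup_right ⟨_, rfl⟩)
      obtain ⟨c, hc⟩ := hr ⟨_, hm⟩
      refine ⟨c, fun i => ?_⟩
      have := congrFun (congrArg Subtype.val hc) i
      simp at this
      simp [← this, mul_comm]
    choose w hw using hD
    have hDe : α - β = Matrix.vecMulVec r.1 w := by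
      ext i j; rw [hw]; rfl
    have htr : (α - β).trace = 0 := by rw [Matrix.trace_sub, hα.2, hβ.2, sub_self]
    have hsq : (α - β)ᴴ * (α - β) = 0 := by
      rw [(hα.1.1.sub hβ.1.1).eq]
      rw [hDe, Matrix.trace_vecMulVec] at htr
      rw [hDe, Matrix.vecMulVec_mul_vecMulVec, dotProduct_comm, htr]
      simp
    rw [Matrix.conjTranspose_mul_self_eq_zero, sub_eq_zero] at hsq
    exact hne hsq
  intro z hz
  have hq : star z ⬝ᵥ (α *ᵥ z) + star z ⬝ᵥ (β *ᵥ z) = 0 := by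
    rw [← dotProduct_add, ← Matrix.add_mulVec, hz, dotProduct_zero]
  have n1 := hα.1.dotProduct_mulVec_nonneg z
  have n2 := hβ.1.dotProduct_mulVec_nonneg z
  have z1 : α *ᵥ z = 0 := by
    rw [← hα.1.dotProduct_mulVec_zero_iff]
    exact ((add_eq_zero_iff_of_nonneg n1 n2).1 hq).1
  have z2 : β *ᵥ z = 0 := by
    rw [← hβ.1.dotProduct_mulVec_zero_iff]
    exact ((add_eq_zero_iff_of_nonneg n1 n2).1 hq).2
  rw [← hδ.1.dotProduct_mulVec_zero_iff]
  have hmem : δ *ᵥ z ∈ R := hR ▸ kδ z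
  obtain ⟨_, ⟨a, rfl⟩, _, ⟨b, rfl⟩, hab⟩ := Submodule.mem_sup.1 hmem
  rw [← hab, dotProduct_add]
  have key : ∀ M : Matrix (Fin 4) (Fin 4) ℂ, M.IsHermitian → M *ᵥ z = 0 → ∀ a,
      star z ⬝ᵥ M.mulVecLin a = 0 := by
    intro M hM hz a
    rw [Matrix.mulVecLin_apply, Matrix.dotProduct_mulVec, ← hM.eq, ← Matrix.star_mulVec, hz]
    simp
  rw [key α hα.1.1 z1, key β hβ.1.1 z2, add_zero]

theorem mul_eq_zero_of_trace {ρ H : Matrix (Fin 4) (Fin 4) ℂ} (hρ : ρ.PosSemidef)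
    (hH : H.PosSemidef) (h : (ρ * H).trace.re = 0) : H * ρ = 0 := by
  obtain ⟨X, rfl⟩ := psd_factor hρ
  obtain ⟨Y, rfl⟩ := psd_factor hH
  have hp : ((Y * Xᴴ)ᴴ * (Y * Xᴴ)).PosSemidef := Matrix.posSemidef_conjTranspose_mul_self _
  have e : ((Y * Xᴴ)ᴴ * (Y * Xᴴ)).trace = (Xᴴ * X * (Yᴴ * Y)).trace := by
    rw [Matrix.conjTranspose_mul, Matrix.conjTranspose_conjTranspose, Matrix.mul_assoc Xᴴ,
      Matrix.trace_mul_comm Xᴴ]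
    simp only [Matrix.mul_assoc]
  have h0 := hp.trace_nonneg
  have ht : ((Y * Xᴴ)ᴴ * (Y * Xᴴ)).trace = 0 := by
    apply Complex.ext
    · rw [e, h]; rfl
    · exact (Complex.le_def.1 h0).2.symm
  rw [Matrix.trace_conjTranspose_mul_self_eq_zero_iff] at ht
  rw [Matrix.mul_assoc, ← Matrix.mul_assoc Y, ht]
  simp

theorem wpt_lin {k : ℕ} (A : Fin k → Matrix (Fin 4) (Fin 4) ℂ) (ρ σ : Matrix (Fin 4) (Fin 4) ℂ)
    (s t : ℝ) : wpt A ((s : ℂ) • ρ + (t : ℂ) • σ) = s • wpt A ρ + t • wpt A σ := by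
  funext i
  simp [wpt, Matrix.add_mul, Matrix.trace_add, Matrix.trace_smul]

theorem wpt_smul {k : ℕ} (A : Fin k → Matrix (Fin 4) (Fin 4) ℂ) (ρ : Matrix (Fin 4) (Fin 4) ℂ)
    (s : ℝ) : wpt A ((s : ℂ) • ρ) = s • wpt A ρ := by
  have := wpt_lin A ρ 0 s 0
  simpa using this

theorem dens_comb {ρ σ : Matrix (Fin 4) (Fin 4) ℂ} (hρ : IsDensity ρ) (hσ : IsDensity σ)
    {s t : ℝ} (hs : 0 ≤ s) (ht : 0 ≤ t) (hst : s + t = 1) :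
    IsDensity ((s : ℂ) • ρ + (t : ℂ) • σ) := by
  refine ⟨(hρ.1.smul (by rwa [Complex.zero_le_real])).add
    (hσ.1.smul (by rwa [Complex.zero_le_real])), ?_⟩
  rw [Matrix.trace_add, Matrix.trace_smul, Matrix.trace_smul, hρ.2, hσ.2]
  simp only [smul_eq_mul, mul_one]
  exact_mod_cast hst

/-- densities annihilated by P -/
def DP (P : Matrix (Fin 4) (Fin 4) ℂ) : Set (Matrix (Fin 4) (Fin 4) ℂ) :=
  {ρ | IsDensity ρ ∧ P * ρ = 0}

theorem convex_WP {k : ℕ} (A : Fin k → Matrix (Fin 4) (Fin 4) ℂ) (P : Matrix (Fin 4) (Fin 4) ℂ) :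
    Convex ℝ (wpt A '' DP P) := by
  rintro _ ⟨ρ, hρ, rfl⟩ _ ⟨σ, hσ, rfl⟩ s t hs ht hst
  refine ⟨_, ⟨dens_comb hρ.1 hσ.1 hs ht hst, ?_⟩, wpt_lin A ρ σ s t⟩
  rw [Matrix.mul_add, Matrix.mul_smul, Matrix.mul_smul, hρ.2, hσ.2]
  simp

theorem convex_W {k : ℕ} (A : Fin k → Matrix (Fin 4) (Fin 4) ℂ) : Convex ℝ (JNR A) := by
  rintro _ ⟨ρ, hρ, rfl⟩ _ ⟨σ, hσ, rfl⟩ s t hs ht hst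
  exact ⟨_, dens_comb hρ hσ hs ht hst, wpt_lin A ρ σ s t⟩

theorem compact_DP (P : Matrix (Fin 4) (Fin 4) ℂ) : IsCompact (DP P) := by
  let S : Set (Matrix (Fin 4) (Fin 4) ℂ) := {X | (Xᴴ * X).trace = 1 ∧ P * (Xᴴ * X) = 0}
  have hS : IsCompact S := by
    have hcl : IsClosed S := by
      apply IsClosed.inter
      · exact isClosed_eq (by fun_prop) continuous_const
      · exact isClosed_eq (by fun_prop) continuous_const
    have hc : IsCompact (Set.univ.pi fun _ : Fin 4 => Set.univ.pi fun _ : Fin 4 =>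
        Metric.closedBall (0 : ℂ) 1) :=
      isCompact_univ_pi fun _ => isCompact_univ_pi fun _ => isCompact_closedBall _ _
    refine IsCompact.of_isClosed_subset hc hcl ?_
    intro X hX i _ j _
    rw [mem_closedBall_zero_iff]
    have h1 := hX.1
    have h2 : ∑ j, ∑ i, ‖X i j‖ ^ 2 = 1 := by
      have h3 : ((∑ j, ∑ i, ‖X i j‖ ^ 2 : ℝ) : ℂ) = 1 := by
        rw [← h1]
        simp only [Matrix.trace, Matrix.diag, Matrix.mul_apply, Matrix.conjTranspose_apply]
        push_cast
        refine Finset.sum_congr rfl fun j _ => Finset.sum_congr rfl fun i _ => ?_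
        rw [← Complex.conj_mul']
        rfl
      exact_mod_cast h3
    have h4 : ‖X i j‖ ^ 2 ≤ 1 := by
      rw [← h2]
      refine le_trans ?_ (Finset.single_le_sum (f := fun j => ∑ i, ‖X i j‖ ^ 2)
        (fun _ _ => by positivity) (Finset.mem_univ j))
      exact Finset.single_le_sum (f := fun i => ‖X i j‖ ^ 2)
        (fun _ _ => by positivity) (Finset.mem_univ i)
    nlinarith [norm_nonneg (X i j)]
  have : DP P = (fun X : Matrix (Fin 4) (Fin 4) ℂ => Xᴴ * X) '' S := by
    ext ρ
    constructor
    · rintro ⟨⟨h1, h2⟩, h3⟩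
      obtain ⟨X, rfl⟩ := psd_factor h1
      exact ⟨X, ⟨h2, h3⟩, rfl⟩
    · rintro ⟨X, ⟨h2, h3⟩, rfl⟩
      exact ⟨⟨Matrix.posSemidef_conjTranspose_mul_self _, h2⟩, h3⟩
  rw [this]
  exact hS.image (by fun_prop)

theorem compact_WP {k : ℕ} (A : Fin k → Matrix (Fin 4) (Fin 4) ℂ) (P : Matrix (Fin 4) (Fin 4) ℂ) :
    IsCompact (wpt A '' DP P) := by
  apply (compact_DP P).image
  unfold wpt
  apply continuous_pi
  intro i
  exact Complex.continuous_re.comp (by fun_prop)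

theorem dens_norm {τ : Matrix (Fin 4) (Fin 4) ℂ} (h : τ.PosSemidef) (h0 : τ ≠ 0) :
    0 < τ.trace.re ∧ IsDensity ((((τ.trace.re)⁻¹ : ℝ) : ℂ) • τ) := by
  have ht := h.trace_nonneg
  have him : τ.trace.im = 0 := (Complex.le_def.1 ht).2.symm
  have hre : 0 ≤ τ.trace.re := (Complex.le_def.1 ht).1
  have hne : τ.trace.re ≠ 0 := by
    intro hz
    exact h0 (h.trace_eq_zero_iff.1 (Complex.ext hz him))
  have e : τ.trace = (τ.trace.re : ℂ) := Complex.ext rfl (by simpa using him)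
  have hd : IsDensity ((((τ.trace.re)⁻¹ : ℝ) : ℂ) • τ) := by
    refine ⟨h.smul (by rw [Complex.zero_le_real]; positivity), ?_⟩
    rw [Matrix.trace_smul, smul_eq_mul]
    nth_rewrite 2 [e]
    rw [← Complex.ofReal_mul, inv_mul_cancel₀ hne]; simp
  refine ⟨lt_of_le_of_ne hre (Ne.symm hne), hd⟩

theorem p_mem {A : Fin 3 → Matrix (Fin 4) (Fin 4) ℂ}
    {P : Matrix (Fin 4) (Fin 4) ℂ}
    (hPherm : Pᴴ = P) (hPproj : P * P = P) (hP0 : P ≠ 0)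
    {p : Fin 3 → ℝ}
    (hAP : ∀ i, A i * P = (p i : ℂ) • P) : p ∈ JNR A := by
  have hp : P.PosSemidef := by
    have := Matrix.posSemidef_conjTranspose_mul_self P
    rwa [hPherm, hPproj] at this
  obtain ⟨h1, h2⟩ := dens_norm hp hP0
  refine ⟨_, h2, ?_⟩
  rw [wpt_smul]
  funext i
  simp only [wpt, Pi.smul_apply, smul_eq_mul]
  rw [Matrix.trace_mul_comm, hAP, Matrix.trace_smul, smul_eq_mul, Complex.re_ofReal_mul]
  field_simp

theorem split {A : Fin 3 → Matrix (Fin 4) (Fin 4) ℂ}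
    (hA : ∀ i, (A i).IsHermitian)
    {P : Matrix (Fin 4) (Fin 4) ℂ}
    (hPherm : Pᴴ = P) (hPproj : P * P = P)
    {p : Fin 3 → ℝ}
    (hAP : ∀ i, A i * P = (p i : ℂ) • P) {ρ : Matrix (Fin 4) (Fin 4) ℂ} (hρ : IsDensity ρ) :
    wpt A ρ = p ∨ ∃ t : ℝ, 0 ≤ t ∧ t ≤ 1 ∧ ∃ σ ∈ DP P, wpt A ρ = t • p + (1 - t) • wpt A σ := by
  have hPA : ∀ i, P * A i = (p i : ℂ) • P := by
    intro i
    have := congrArg Matrix.conjTranspose (hAP i)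
    rw [Matrix.conjTranspose_mul, Matrix.conjTranspose_smul, hPherm, (hA i).eq] at this
    simpa using this
  have hQ : (1 - P)ᴴ = 1 - P := by simp [hPherm]
  have hτ : ((1 - P) * ρ * (1 - P)).PosSemidef := by
    have := hρ.1.conjTranspose_mul_mul_same (1 - P)
    rwa [hQ] at this
  have hPP : (P * ρ * P).PosSemidef := by
    have := hρ.1.conjTranspose_mul_mul_same P
    rwa [hPherm] at this
  have hQQ : (1 - P) * (1 - P) = 1 - P := by
    simp [Matrix.mul_sub, Matrix.sub_mul, hPproj]
  have hPQ : P * (1 - P) = 0 := by simp [Matrix.mul_sub, hPproj]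
  have hPtr : (P * ρ * P).trace = (ρ * P).trace := by
    rw [Matrix.mul_assoc, Matrix.trace_mul_comm, Matrix.mul_assoc, hPproj]
  have htr : ((1 - P) * ρ * (1 - P)).trace = 1 - (ρ * P).trace := by
    rw [Matrix.mul_assoc, Matrix.trace_mul_comm, Matrix.mul_assoc, hQQ, Matrix.mul_sub,
      Matrix.trace_sub, Matrix.mul_one, hρ.2]
  have hw : wpt A ρ = (ρ * P).trace.re • p + wpt A ((1 - P) * ρ * (1 - P)) := by
    funext i
    simp only [wpt, Pi.add_apply, Pi.smul_apply, smul_eq_mul]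
    have e : (1 - P) * A i * (1 - P) = A i - (p i : ℂ) • P := by
      simp only [Matrix.sub_mul, Matrix.mul_sub, Matrix.one_mul, Matrix.mul_one, hPA, hAP,
        Matrix.smul_mul, hPproj]
      simp
    have : ((1 - P) * ρ * (1 - P) * A i).trace = (ρ * A i).trace - (p i : ℂ) * (ρ * P).trace := by
      rw [Matrix.mul_assoc, Matrix.mul_assoc, Matrix.trace_mul_comm, Matrix.mul_assoc, e,
        Matrix.mul_sub, Matrix.trace_sub, Matrix.mul_smul, Matrix.trace_smul, smul_eq_mul]
    rw [this, Complex.sub_re, Complex.re_ofReal_mul]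
    ring
  by_cases h0 : (1 - P) * ρ * (1 - P) = 0
  · left
    rw [h0, Matrix.trace_zero] at htr
    rw [hw, h0, ← sub_eq_zero.1 htr.symm]
    funext i
    simp [wpt]
  · right
    obtain ⟨h1, h2⟩ := dens_norm hτ h0
    rw [htr] at h1 h2
    simp only [Complex.sub_re, Complex.one_re] at h1 h2
    refine ⟨(ρ * P).trace.re, ?_, by linarith, _, ⟨h2, ?_⟩, ?_⟩
    · rw [← hPtr]; exact (Complex.le_def.1 hPP.trace_nonneg).1
    · rw [Matrix.mul_smul, ← Matrix.mul_assoc, ← Matrix.mul_assoc, hPQ]; simp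
    · rw [wpt_smul, smul_smul, mul_inv_cancel₀ h1.ne', one_smul]; exact hw

theorem dotR_comm {d : ℕ} (u v : Fin d → ℝ) : dotR u v = dotR v u := by
  simp [dotR, mul_comm]

theorem dotR_rep {d : ℕ} (f : (Fin d → ℝ) →ₗ[ℝ] ℝ) (x : Fin d → ℝ) :
    f x = dotR (fun i => f (Pi.single i 1)) x := by
  rw [LinearMap.pi_apply_eq_sum_univ f x, dotR]
  refine Finset.sum_congr rfl fun i _ => ?_
  rw [smul_eq_mul, mul_comm]
  congr 2
  funext j
  simp [Pi.single_apply, eq_comm]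

theorem dotR_add_right {d : ℕ} (u v w : Fin d → ℝ) : dotR u (v + w) = dotR u v + dotR u w := by
  simp [dotR, mul_add, Finset.sum_add_distrib]

theorem dotR_smul_right {d : ℕ} (u v : Fin d → ℝ) (c : ℝ) : dotR u (c • v) = c * dotR u v := by
  simp only [dotR, Finset.mul_sum, Pi.smul_apply, smul_eq_mul]
  exact Finset.sum_congr rfl fun i _ => by ring

theorem dotR_sub_right {d : ℕ} (u v w : Fin d → ℝ) : dotR u (v - w) = dotR u v - dotR u w := by
  simp [dotR, mul_sub, Finset.sum_sub_distrib]

theorem dotR_single {d : ℕ} (u : Fin d → ℝ) (i : Fin d) : dotR u (Pi.single i 1) = u i := by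
  simp [dotR, Pi.single_apply]

theorem corner_of {d : ℕ} {W W' : Set (Fin d → ℝ)} {p : Fin d → ℝ} (hc : IsCompact W')
    (hconv : Convex ℝ W') (hp : p ∉ W')
    (hW : ∀ y ∈ W, y = p ∨ ∃ t : ℝ, 0 ≤ t ∧ t ≤ 1 ∧ ∃ z ∈ W', y = t • p + (1 - t) • z) :
    Submodule.span ℝ (normalConeAt W p) = ⊤ := by
  obtain ⟨f, s, hfp, hfs⟩ := geometric_hahn_banach_point_closed hconv hc.isClosed hp
  obtain ⟨M, hM⟩ := hc.isBounded.subset_closedBall p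
  set u : Fin d → ℝ := fun i => f (Pi.single i 1) with hu
  have hf : ∀ x, f x = dotR u x := fun x => dotR_rep f.toLinearMap x
  have hcone : ∀ v : Fin d → ℝ, (∀ z ∈ W', 0 ≤ dotR (z - p) v) → v ∈ normalConeAt W p := by
    intro v hv y hy
    rcases hW y hy with rfl | ⟨t, h0, h1, z, hz, rfl⟩
    · simp [dotR]
    · have e : t • p + (1 - t) • z - p = (1 - t) • (z - p) := by module
      rw [e, dotR_comm, dotR_smul_right, dotR_comm]
      exact mul_nonneg (by linarith) (hv z hz)
  have hd : ∀ z ∈ W', s - f p ≤ dotR (z - p) u := by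
    intro z hz
    rw [dotR_comm, dotR_sub_right, ← hf, ← hf]
    linarith [hfs z hz]
  have hu1 : u ∈ normalConeAt W p := hcone u fun z hz => by linarith [hd z hz]
  set ε := (s - f p) / (|M| + 1) with hε
  have hpos : 0 < ε := div_pos (by linarith) (by positivity)
  have hεM : ε * (|M| + 1) = s - f p := by rw [hε]; field_simp
  have hu2 : ∀ i, u + ε • Pi.single i 1 ∈ normalConeAt W p := by
    intro i
    apply hcone
    intro z hz
    rw [dotR_add_right, dotR_smul_right, dotR_single]
    have h1 := hd z hz
    have h2 : ‖z - p‖ ≤ M := by simpa [dist_eq_norm] using hM hz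
    have h3 := (norm_le_pi_norm (z - p) i).trans (h2.trans (le_abs_self M))
    rw [Real.norm_eq_abs] at h3
    have h4 := (abs_le.1 h3).1
    nlinarith
  rw [eq_top_iff, ← (Pi.basisFun ℝ (Fin d)).span_eq, Submodule.span_le]
  rintro _ ⟨i, rfl⟩
  have e : (Pi.basisFun ℝ (Fin d)) i = ε⁻¹ • ((u + ε • Pi.single i 1) - u) := by
    rw [add_sub_cancel_left, smul_smul, inv_mul_cancel₀ hpos.ne', one_smul]
    simp
  rw [e]
  exact Submodule.smul_mem _ _ (Submodule.sub_mem _ (Submodule.subset_span (hu2 i))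
    (Submodule.subset_span hu1))

theorem relint {d : ℕ} {W : Set (Fin d → ℝ)} (hW : Convex ℝ W) {m : Fin d → ℝ} (hm : m ∈ W)
    (h : ∀ u, (∀ y ∈ W, dotR u m ≤ dotR u y) → ∀ y ∈ W, dotR u y = dotR u m)
    {y : Fin d → ℝ} (hy : y ∈ W) : ∃ z ∈ W, m ∈ openSegment ℝ y z := by
  let S : Submodule ℝ (Fin d → ℝ) := Submodule.span ℝ ((fun x => x - m) '' W)
  let V : Set S := {s | m + s.1 ∈ W}
  have hV0 : (0 : S) ∈ V := by simpa [V] using hm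
  have hVc : Convex ℝ V := by
    intro a ha b hb s t hs ht hst
    have := hW ha hb hs ht hst
    change m + (s • a.1 + t • b.1) ∈ W
    convert this using 1
    rw [smul_add, smul_add, add_add_add_comm, ← add_smul, hst, one_smul]
  have hmem : ∀ x ∈ W, x - m ∈ S := fun x hx => Submodule.subset_span ⟨x, hx, rfl⟩
  have hspan : Submodule.span ℝ V = ⊤ := by
    have e : V = (Subtype.val ⁻¹' ((fun x => x - m) '' W) : Set S) := by
      ext s
      constructor
      · intro hs; exact ⟨_, hs, by simp⟩
      · rintro ⟨x, hx, hxs⟩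
        change m + s.1 ∈ W
        rw [← hxs]; simpa using hx
    rw [e]
    exact Submodule.span_span_coe_preimage
  have hint : (interior V).Nonempty := by
    rw [hVc.interior_nonempty_iff_affineSpan_eq_top,
      AffineSubspace.affineSpan_eq_top_iff_vectorSpan_eq_top_of_nonempty ℝ S S ⟨0, hV0⟩,
      vectorSpan_eq_span_vsub_set_right ℝ hV0]
    simpa using hspan
  have h0 : (0 : S) ∈ interior V := by
    by_contra hn
    obtain ⟨f, hf0, hf⟩ := geometric_hahn_banach_of_nonempty_interior_point hVc hn hint
    obtain ⟨g, hg⟩ := LinearMap.exists_extend (-f.toLinearMap)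
    have hgs : ∀ s : S, g s.1 = - f s := fun s => LinearMap.congr_fun hg s
    have hc := h (fun i => g (Pi.single i 1)) (by
      intro y hy
      rw [← dotR_rep, ← dotR_rep]
      have h1 := hf ⟨y - m, hmem y hy⟩ (by simpa [V] using hy)
      have h2 := hgs ⟨y - m, hmem y hy⟩
      rw [map_zero] at h1
      simp only [map_sub] at h2
      linarith)
    simp only [← dotR_rep] at hc
    apply hf0
    have : f.toLinearMap = 0 := by
      apply LinearMap.ext_on hspan
      intro s hs
      have h1 := hc _ hs
      rw [map_add, hgs] at h1
      have : f s = 0 := by linarith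
      simpa using this
    ext s
    exact LinearMap.congr_fun this s
  let w : S := ⟨y - m, hmem y hy⟩
  have hcont : Filter.Tendsto (fun ε : ℝ => -(ε • w)) (nhdsWithin 0 (Set.Ioi 0)) (nhds (0 : S)) := by
    have : Continuous (fun ε : ℝ => -(ε • w)) := by fun_prop
    have h2 := this.tendsto 0
    simp only [zero_smul, neg_zero] at h2
    exact h2.mono_left nhdsWithin_le_nhds
  have hev := (hcont.eventually (mem_interior_iff_mem_nhds.1 h0)).and self_mem_nhdsWithin
  obtain ⟨ε, hε, hpos⟩ := hev.exists
  have hpos : 0 < ε := hpos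
  refine ⟨_, hε, ε / (1 + ε), 1 / (1 + ε), by positivity, by positivity, by field_simp; ring, ?_⟩
  funext i
  simp [w]
  field_simp
  ring

/-- the pencil -/
def Hm (A : Fin 3 → Matrix (Fin 4) (Fin 4) ℂ) (u : Fin 3 → ℝ) (c : ℝ) :
    Matrix (Fin 4) (Fin 4) ℂ := ∑ i, (u i : ℂ) • A i - (c : ℂ) • 1

theorem Hm_herm {A : Fin 3 → Matrix (Fin 4) (Fin 4) ℂ} (hA : ∀ i, (A i).IsHermitian)
    (u : Fin 3 → ℝ) (c : ℝ) : (Hm A u c).IsHermitian := by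
  unfold Matrix.IsHermitian Hm
  rw [Matrix.conjTranspose_sub, Matrix.conjTranspose_sum]
  simp only [Matrix.conjTranspose_smul, (hA _).eq, Matrix.conjTranspose_one]
  simp

theorem Hm_trace (A : Fin 3 → Matrix (Fin 4) (Fin 4) ℂ) (u : Fin 3 → ℝ) (c : ℝ)
    (ρ : Matrix (Fin 4) (Fin 4) ℂ) (hρ : IsDensity ρ) :
    (ρ * Hm A u c).trace.re = dotR u (wpt A ρ) - c := by
  unfold Hm dotR wpt
  rw [Matrix.mul_sub, Matrix.trace_sub, Matrix.mul_sum, Matrix.trace_sum]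
  simp [Matrix.trace_smul, hρ.2]

theorem Hm_psd {A : Fin 3 → Matrix (Fin 4) (Fin 4) ℂ} (hA : ∀ i, (A i).IsHermitian)
    {u : Fin 3 → ℝ} {c : ℝ} (h : ∀ y ∈ JNR A, c ≤ dotR u y) : (Hm A u c).PosSemidef := by
  have hH := Hm_herm hA u c
  refine Matrix.PosSemidef.of_dotProduct_mulVec_nonneg hH fun x => ?_
  have him : (star x ⬝ᵥ (Hm A u c *ᵥ x)).im = 0 := hH.im_star_dotProduct_mulVec_self x
  suffices hre : 0 ≤ (star x ⬝ᵥ (Hm A u c *ᵥ x)).re by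
    rw [Complex.le_def]; exact ⟨hre, him.symm⟩
  have e : (Matrix.vecMulVec x (star x) * Hm A u c).trace = star x ⬝ᵥ (Hm A u c *ᵥ x) := by
    rw [Matrix.vecMulVec_mul, Matrix.trace_vecMulVec, Matrix.dotProduct_mulVec, dotProduct_comm]
  rw [← e]
  by_cases hx : Matrix.vecMulVec x (star x) = 0
  · rw [hx]; simp
  · obtain ⟨h1, h2⟩ := dens_norm (Matrix.posSemidef_vecMulVec_self_star x) hx
    have h3 := Hm_trace A u c _ h2
    have h4 := h _ ⟨_, h2, rfl⟩
    rw [Matrix.smul_mul, Matrix.trace_smul, smul_eq_mul, Complex.re_ofReal_mul] at h3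
    have h5 : 0 ≤ (Matrix.vecMulVec x (star x)).trace.re⁻¹ *
        (Matrix.vecMulVec x (star x) * Hm A u c).trace.re := by
      rw [h3]; linarith
    exact nonneg_of_mul_nonneg_right h5 (by positivity)

theorem exposed_of {A : Fin 3 → Matrix (Fin 4) (Fin 4) ℂ}
    (hA : ∀ i, (A i).IsHermitian)
    {P : Matrix (Fin 4) (Fin 4) ℂ} (hP0 : P ≠ 0)
    (hW : ∀ y ∈ JNR A, ∃ ρ ∈ DP P, wpt A ρ = y)
    {G : Set (Fin 3 → ℝ)} (hG : IsFaceOf (JNR A) G) (hdim : convDim G = 1) :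
    IsExposedFace (JNR A) G := by
  obtain ⟨hGc, hGe⟩ := hG
  have hns : ¬ G.Subsingleton := by
    intro hs
    unfold convDim at hdim
    rw [direction_affineSpan, vectorSpan_of_subsingleton ℝ hs, finrank_bot] at hdim
    omega
  rw [Set.not_subsingleton_iff] at hns
  obtain ⟨a, ha, b, hb, hab⟩ := hns
  set m : Fin 3 → ℝ := (1 / 2 : ℝ) • a + (1 / 2 : ℝ) • b with hmdef
  have hm : m ∈ G := hGc ha hb (by norm_num) (by norm_num) (by norm_num)
  have hmW := hGe.subset hm
  by_cases hN : ∀ u, (∀ y ∈ JNR A, dotR u m ≤ dotR u y) → ∀ y ∈ JNR A, dotR u y = dotR u m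
  · refine ⟨0, ?_⟩
    ext y
    constructor
    · intro hy; exact ⟨hGe.subset hy, fun z _ => by simp [dotR]⟩
    · rintro ⟨hy, -⟩
      obtain ⟨z, hz, hmz⟩ := relint (convex_W A) hmW hN hy
      exact hGe.left_mem_of_mem_openSegment hy hz hm hmz
  · push Not at hN
    obtain ⟨u, hu, y₀, hy₀, hne⟩ := hN
    have hH := Hm_psd hA hu
    set H := Hm A u (dotR u m) with hHdef
    have hker : ∀ ρ, IsDensity ρ → dotR u (wpt A ρ) = dotR u m → H * ρ = 0 := by
      intro ρ hρ he
      apply mul_eq_zero_of_trace hρ.1 hH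
      rw [Hm_trace A u _ ρ hρ, he, sub_self]
    let K := LinearMap.ker H.mulVecLin ⊓ LinearMap.ker P.mulVecLin
    have hPlt : Module.finrank ℂ (LinearMap.ker P.mulVecLin) < 4 := by
      have hlt : LinearMap.ker P.mulVecLin < ⊤ := by
        rw [lt_top_iff_ne_top]
        intro ht
        apply hP0
        rw [LinearMap.ker_eq_top] at ht
        ext i j
        have := congrFun (LinearMap.congr_fun ht (Pi.single j 1)) i
        simpa using this
      simpa using Submodule.finrank_lt hlt.ne
    have hKlt : Module.finrank ℂ K < Module.finrank ℂ (LinearMap.ker P.mulVecLin) := by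
      apply Submodule.finrank_lt_finrank_of_lt
      refine lt_of_le_of_ne inf_le_right ?_
      intro he
      obtain ⟨ρ, hρ, rfl⟩ := hW y₀ hy₀
      have h0 : H * ρ = 0 := by
        ext i j
        have hk : ρ *ᵥ (Pi.single j 1) ∈ LinearMap.ker P.mulVecLin := by
          rw [LinearMap.mem_ker, Matrix.mulVecLin_apply, Matrix.mulVec_mulVec, hρ.2,
            Matrix.zero_mulVec]
        rw [← he] at hk
        have h1 := hk.1
        rw [SetLike.mem_coe, LinearMap.mem_ker, Matrix.mulVecLin_apply, Matrix.mulVec_mulVec] at h1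
        simpa using congrFun h1 i
      have h1 := Hm_trace A u (dotR u m) ρ hρ.1
      rw [Matrix.trace_mul_comm, ← hHdef, h0] at h1
      apply hne
      simp at h1
      linarith
    have hK : Module.finrank ℂ K ≤ 2 := by omega
    have hmemK : ∀ ρ ∈ DP P, dotR u (wpt A ρ) = dotR u m → ∀ x, ρ *ᵥ x ∈ K := by
      intro ρ hρ he x
      refine ⟨?_, ?_⟩
      · simp [Matrix.mulVec_mulVec, hker ρ hρ.1 he]
      · simp [Matrix.mulVec_mulVec, hρ.2]
    have hmd : dotR u m = (1 / 2) * dotR u a + (1 / 2) * dotR u b := by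
      rw [hmdef, dotR_add_right, dotR_smul_right, dotR_smul_right]
    have hua := hu a (hGe.subset ha)
    have hub := hu b (hGe.subset hb)
    have hGu : ∀ y ∈ JNR A, dotR u y = dotR u m → y ∈ G := by
      intro y hy he
      obtain ⟨α, hα, hαa⟩ := hW a (hGe.subset ha)
      obtain ⟨β, hβ, hβb⟩ := hW b (hGe.subset hb)
      obtain ⟨δ, hδ, hδy⟩ := hW y hy
      obtain ⟨ε, h0, h1, hpsd⟩ := bloch hα.1 hβ.1 hδ.1 K hK
        (hmemK α hα (by rw [hαa]; linarith)) (hmemK β hβ (by rw [hβb]; linarith))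
        (hmemK δ hδ (by rw [hδy]; exact he)) (by rintro rfl; exact hab (hαa.symm.trans hβb))
      have htr : (α + β - (ε : ℂ) • δ).trace = ((2 - ε : ℝ) : ℂ) := by
        rw [Matrix.trace_sub, Matrix.trace_add, Matrix.trace_smul, hα.1.2, hβ.1.2, hδ.1.2]
        push_cast; simp; ring
      obtain ⟨h2, h3⟩ := dens_norm hpsd (by
        intro hz
        rw [hz, Matrix.trace_zero] at htr
        have : (0 : ℝ) = 2 - ε := by exact_mod_cast htr
        linarith)
      rw [htr, Complex.ofReal_re] at h2 h3
      refine hGe.left_mem_of_mem_openSegment hy ⟨_, h3, rfl⟩ hm ?_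
      refine ⟨ε / 2, (2 - ε) / 2, by linarith, by linarith, by ring, ?_⟩
      have e : wpt A (α + β - (ε : ℂ) • δ) = a + b - ε • y := by
        have q1 := wpt_lin A α β 1 1
        have q2 := wpt_lin A (α + β) δ 1 (-ε)
        simp only [Complex.ofReal_one, one_smul, Complex.ofReal_neg, neg_smul,
          ← sub_eq_add_neg] at q1 q2
        rw [q2, q1, hαa, hβb, hδy]
      rw [wpt_smul, e, smul_smul, hmdef]
      have : (2 - ε) / 2 * (2 - ε)⁻¹ = 1 / 2 := by field_simp
      rw [this]
      module
    refine ⟨u, ?_⟩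
    ext y
    constructor
    · intro hy
      refine ⟨hGe.subset hy, ?_⟩
      suffices hyu : dotR u y = dotR u m by rw [hyu]; exact hu
      unfold convDim at hdim
      rw [direction_affineSpan] at hdim
      have hv : (⟨b - a, vsub_mem_vectorSpan ℝ hb ha⟩ : vectorSpan ℝ G) ≠ 0 := by
        intro hz
        exact hab (sub_eq_zero.1 (congrArg Subtype.val hz)).symm
      obtain ⟨c, hc⟩ := (finrank_eq_one_iff_of_nonzero' _ hv).1 hdim
        ⟨y - a, vsub_mem_vectorSpan ℝ hy ha⟩
      have hc' : c • (b - a) = y - a := congrArg Subtype.val hc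
      have h1 : c * (dotR u b - dotR u a) = dotR u y - dotR u a := by
        rw [← dotR_sub_right, ← dotR_sub_right, ← hc', dotR_smul_right]
      have h2 : dotR u b = dotR u a := by linarith
      rw [h2, sub_self, mul_zero] at h1
      linarith
    · rintro ⟨hy, hle⟩
      exact hGu y hy (le_antisymm (hle m hmW) (hu y hy))

/-- if `A₁,A₂,A₃` have a common reducing projection `P` on which
they act as the scalars `p₁,p₂,p₃`, and `W` has a one-dimensional nonexposed
face, then `(p₁,p₂,p₃)` is a corner point of `W`. -/
theorem stmt6 (A : Fin 3 → Matrix (Fin 4) (Fin 4) ℂ)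
    (hA : ∀ i, (A i).IsHermitian)
    (P : Matrix (Fin 4) (Fin 4) ℂ)
    (hPherm : Pᴴ = P) (hPproj : P * P = P) (hP0 : P ≠ 0)
    (p : Fin 3 → ℝ)
    (hAP : ∀ i, A i * P = (p i : ℂ) • P)
    (hG : ∃ G, IsFaceOf (JNR A) G ∧ convDim G = 1 ∧
      ¬ IsExposedFace (JNR A) G) :
    IsCornerPoint (JNR A) p := by
  have hpW := p_mem hPherm hPproj hP0 hAP
  refine ⟨hpW, ?_⟩
  by_cases hp : p ∈ wpt A '' DP P
  · exfalso
    obtain ⟨G, hG, hd, hne⟩ := hG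
    refine hne (exposed_of hA hP0 ?_ hG hd)
    rintro _ ⟨ρ, hρ, rfl⟩
    rcases split hA hPherm hPproj hAP hρ with h | ⟨t, h0, h1, σ, hσ, h⟩
    · rw [h]; exact hp
    · rw [h]
      exact convex_WP A P hp ⟨σ, hσ, rfl⟩ h0 (by linarith) (by ring)
  · apply corner_of (compact_WP A P) (convex_WP A P) hp
    rintro _ ⟨ρ, hρ, rfl⟩
    rcases split hA hPherm hPproj hAP hρ with h | ⟨t, h0, h1, σ, hσ, h⟩
    · exact Or.inl h
    · exact Or.inr ⟨t, h0, h1, _, ⟨σ, hσ, rfl⟩, h⟩
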